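/- arXiv:2212.07819 — 2 statements merged into one kernel-verified Lean document; each statement's English description precedes it below -/
import Mathlib

section
/- Let F be a field with at least 4 elements and χ : F^× → {±1} a group homomorphism with χ(−1) = 1. Suppose ℓ ∈ F with ℓ ∉ {0, 1} satisfies χ(ℓ) = −1 and χ(1 − ℓ) = 1. Then for every a ∈ F^× and every t ∈ ℓℤ[ℓ] (i.e. t = ℓ·p(ℓ) for some p ∈ ℤ[X]) with a + t ≠ 0, the classes of [a] and [a + t] in RP₊(F)[1/2]_χ are equal. -/
noncomputable section

open Polynomial

/-- The ring `ℤ[1/2]`, realized as the subring of `ℚ` generated by `1/2`. -/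
def ZhalfSub : Subring ℚ := Subring.closure {(2 : ℚ)⁻¹}

abbrev Zhalf : Type := ZhalfSub

variable (F : Type) [Field F]

/-- The generator `[u]` of the free `ℤ[1/2]`-module on `Fˣ`. -/
def rpGen (u : Fˣ) : Fˣ →₀ Zhalf := Finsupp.single u 1

/-- The defining relations of `RP₊(F)[1/2]_χ`: (i) `[1] = 0`; (ii) the twisted five-term
relations; (iii) `χ(−1)·[x] = [x]`; (iv) `[x] = −[x⁻¹]`. -/
def rpRels (χ : Fˣ →* ℤˣ) : Set (Fˣ →₀ Zhalf) :=
  {v | v = rpGen F 1} ∪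
  {v | ∃ (x y : F) (hx0 : x ≠ 0) (hx1 : x ≠ 1) (hy0 : y ≠ 0) (hy1 : y ≠ 1) (_ : x ≠ y),
      v = rpGen F (Units.mk0 x hx0) - rpGen F (Units.mk0 y hy0)
        + ((χ (Units.mk0 x hx0) : ℤ) : Zhalf) •
            rpGen F (Units.mk0 (y / x) (div_ne_zero hy0 hx0))
        - ((χ (Units.mk0 (x⁻¹ - 1)
              (sub_ne_zero.mpr (fun h => hx1 (inv_eq_one.mp h)))) : ℤ) : Zhalf) •
            rpGen F (Units.mk0 ((1 - x⁻¹) / (1 - y⁻¹))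
              (div_ne_zero (sub_ne_zero.mpr (fun h => hx1 (inv_eq_one.mp h.symm)))
                (sub_ne_zero.mpr (fun h => hy1 (inv_eq_one.mp h.symm)))))
        + ((χ (Units.mk0 (1 - x) (sub_ne_zero.mpr (Ne.symm hx1))) : ℤ) : Zhalf) •
            rpGen F (Units.mk0 ((1 - x) / (1 - y))
              (div_ne_zero (sub_ne_zero.mpr (Ne.symm hx1)) (sub_ne_zero.mpr (Ne.symm hy1))))} ∪
  {v | ∃ u : Fˣ, v = ((χ (-1) : ℤ) : Zhalf) • rpGen F u - rpGen F u} ∪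
  {v | ∃ u : Fˣ, v = rpGen F u + rpGen F u⁻¹}

/-- The submodule of relations. -/
def rpSub (χ : Fˣ →* ℤˣ) : Submodule Zhalf (Fˣ →₀ Zhalf) :=
  Submodule.span Zhalf (rpRels F χ)

/-- The `ℤ[1/2]`-module `RP₊(F)[1/2]_χ`. -/
def RPplus (χ : Fˣ →* ℤˣ) : Type :=
  (Fˣ →₀ Zhalf) ⧸ rpSub F χ

instance (χ : Fˣ →* ℤˣ) : AddCommGroup (RPplus F χ) :=
  inferInstanceAs (AddCommGroup ((Fˣ →₀ Zhalf) ⧸ rpSub F χ))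

instance (χ : Fˣ →* ℤˣ) : Module Zhalf (RPplus F χ) :=
  inferInstanceAs (Module Zhalf ((Fˣ →₀ Zhalf) ⧸ rpSub F χ))

/-- The class `[u]` of `u ∈ F^×` in `RP₊(F)[1/2]_χ`. -/
def rpCls (χ : Fˣ →* ℤˣ) (u : Fˣ) : RPplus F χ :=
  Submodule.Quotient.mk (rpGen F u)

end

/-! A function on `F` satisfying the relations of `RP₊(F)[1/2]_χ` has `f x + f (1 - x)` constant.
The relations for `(x, y)` and `(y, x)` involve the same five values up to sign, so whenever
`χ x = χ y` and `χ (1 - x) = -χ (1 - y)` the five-term relation splits into a three-term and a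
two-term relation. Let `w = 1 - ℓ`. The two-term relation for `(w², -w)` gives `f w = 0`, and then
the three-term relation makes `f` invariant under multiplication by `w`. Together with the
reflection `x ↦ 1 - x` this makes `f` periodic under translation by `ℓ` away from `0`, with
`f (-ℓ) = f ℓ`, so that setting `f 0 := f ℓ` turns `f` into a genuinely `ℓ`-periodic function. The
periods of this function form a group stable under multiplication by `w`, hence by `ℓ = 1 - w`, and
so contain `ℓℤ[ℓ]`. -/

section Periods

open Function Polynomial

theorem periodic_mul_of_map_mul {R α : Type*} [Semiring R] {f : R → α} {w : R} (hw : IsUnit w)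
    (hmul : ∀ q, f (q * w) = f q) {s : R} (hs : Periodic f s) : Periodic f (s * w) := by
  obtain ⟨w, rfl⟩ := hw
  intro a
  calc f (a + s * w) = f ((a * ↑w⁻¹ + s) * w) := by rw [add_mul, Units.inv_mul_cancel_right]
    _ = f (a * ↑w⁻¹ * w) := by rw [hmul, hs, hmul]
    _ = f a := by rw [Units.inv_mul_cancel_right]

theorem periodic_mul_aeval {R α : Type*} [Ring R] {f : R → α} {l : R}
    (hl : ∀ s, Periodic f s → Periodic f (s * l)) {s : R} (hs : Periodic f s) (p : ℤ[X]) :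
    Periodic f (s * aeval l p) := by
  have hpow (n : ℕ) : Periodic f (s * l ^ n) := by
    induction n with
    | zero => rwa [pow_zero, mul_one]
    | succ n ih => rw [pow_succ, ← mul_assoc]; exact hl _ ih
  induction p using Polynomial.induction_on' with
  | add p q hp hq => rw [map_add, mul_add]; exact hp.add_period hq
  | monomial n k =>
    rw [aeval_monomial, eq_intCast, ← zsmul_eq_mul, mul_smul_comm]
    exact (hpow n).zsmul k

theorem periodic_update_zero {K M : Type*} [AddGroup K] [DecidableEq K] {f : K → M} {l : K}
    (hneg : f (-l) = f l) (hadd : ∀ a, a ≠ 0 → a + l ≠ 0 → f (a + l) = f a) :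
    Periodic (update f 0 (f l)) l := by
  intro a
  by_cases ha : a = 0
  · by_cases hl : l = 0 <;> simp [ha, hl]
  by_cases hal : a + l = 0
  · rw [hal, eq_neg_of_add_eq_zero_left hal, update_self, update_of_ne, hneg]
    rwa [← eq_neg_of_add_eq_zero_left hal]
  · rw [update_of_ne hal, update_of_ne ha, hadd a ha hal]

variable {K M : Type*} [Field K] {f : K → M} {w : K}

theorem map_add_one_sub_of_reflection [AddCancelCommMonoid M] {c : M} (hw : w ≠ 0)
    (hmul : ∀ q, f (q * w) = f q) (hrefl : ∀ x, x ≠ 0 → x ≠ 1 → f x + f (1 - x) = c)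
    {a : K} (ha : a ≠ 0) (haw : a + (1 - w) ≠ 0) : f (a + (1 - w)) = f a := by
  rcases eq_or_ne a w with rfl | hne
  · rw [add_sub_cancel, ← hmul 1, one_mul]
  have h₁ := hrefl (w - a) (sub_ne_zero.mpr hne.symm) fun h => haw (by linear_combination -h)
  have h₂ := hrefl (a / w) (div_ne_zero ha hw) (mt (div_eq_one_iff_eq hw).mp hne)
  have hdiv (q : K) : f (q / w) = f q := by rw [← hmul, div_mul_cancel₀ q hw]
  rw [one_sub_div hw, hdiv, hdiv, ← h₁, add_comm] at h₂
  rw [add_left_cancel h₂, sub_sub_eq_add_sub, add_sub_right_comm, add_comm]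

theorem map_neg_one_sub_of_map_add (hw₀ : w ≠ 0) (hw₁ : w ≠ 1) (hmul : ∀ q, f (q * w) = f q)
    (hadd : ∀ a, a ≠ 0 → a + (1 - w) ≠ 0 → f (a + (1 - w)) = f a) :
    f (-(1 - w)) = f (1 - w) := by
  have hl : 1 - w ≠ 0 := sub_ne_zero.mpr hw₁.symm
  have h₁ : -(1 - w) / w + (1 - w) = -(1 - w) ^ 2 / w := by field_simp; ring
  have h₂ : -(1 - w) ^ 2 + (1 - w) = (1 - w) * w := by ring
  have hdiv (q : K) : f (q / w) = f q := by rw [← hmul, div_mul_cancel₀ q hw₀]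
  calc f (-(1 - w)) = f (-(1 - w) / w) := (hdiv _).symm
    _ = f (-(1 - w) / w + (1 - w)) := (hadd _ (div_ne_zero (neg_ne_zero.mpr hl) hw₀)
      (h₁ ▸ div_ne_zero (neg_ne_zero.mpr (pow_ne_zero 2 hl)) hw₀)).symm
    _ = f (-(1 - w) ^ 2) := by rw [h₁, hdiv]
    _ = f (-(1 - w) ^ 2 + (1 - w)) :=
      (hadd _ (neg_ne_zero.mpr (pow_ne_zero 2 hl)) (h₂ ▸ mul_ne_zero hl hw₀)).symm
    _ = f (1 - w) := by rw [h₂, hmul]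

end Periods

section IntMulChar

variable {F : Type*} [Field F] (e : MulChar F ℤ)

theorem intMulChar_ne_zero_iff {x : F} : e x ≠ 0 ↔ x ≠ 0 :=
  MulChar.apply_ne_zero_iff.trans isUnit_iff_ne_zero

theorem intMulChar_one_sub_ne_zero_iff {x : F} : e (1 - x) ≠ 0 ↔ x ≠ 1 := by
  rw [intMulChar_ne_zero_iff, sub_ne_zero, ne_comm]

theorem intMulChar_eq_one_or_neg_one {x : F} (hx : x ≠ 0) : e x = 1 ∨ e x = -1 :=
  Int.isUnit_iff.mp (hx.isUnit.map e)

theorem intMulChar_mul_self {x : F} (hx : x ≠ 0) : e x * e x = 1 :=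
  Int.isUnit_mul_self (hx.isUnit.map e)

theorem intMulChar_inv (x : F) : e x⁻¹ = e x := by
  rcases eq_or_ne x 0 with rfl | hx
  · rw [inv_zero]
  · have h : e x * e x⁻¹ = 1 := by rw [← map_mul, mul_inv_cancel₀ hx, MulChar.map_one]
    have := intMulChar_mul_self e hx
    linear_combination e x * h - e x⁻¹ * this

end IntMulChar

/-- A function `f : F → M`, taken at `0` with the value `0` when `M` has no `2`-torsion, that
satisfies the defining relations of `RP₊(F)[1/2]_χ`; the sign character enters as its extension by
zero `e`. Relation (iii), which kills the module when `χ (-1) = -1`, is replaced by `e (-1) = 1`,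
and the argument `(1 - x⁻¹) / (1 - y⁻¹)` is cleared of inner inverses. -/
structure IsTwistedFiveTerm {F M : Type*} [Field F] [AddCommGroup M] (e : MulChar F ℤ)
    (f : F → M) : Prop where
  char_neg_one : e (-1) = 1
  map_one : f 1 = 0
  map_inv : ∀ x, f x⁻¹ = -f x
  five_term : ∀ x y, x ≠ 0 → x ≠ 1 → y ≠ 0 → y ≠ 1 → x ≠ y →
    f x - f y + e x • f (y / x) - (e x * e (1 - x)) • f (y * (1 - x) / ((1 - y) * x))
      + e (1 - x) • f ((1 - x) / (1 - y)) = 0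

namespace IsTwistedFiveTerm

open Polynomial

variable {F M : Type*} [Field F] [AddCommGroup M] {e : MulChar F ℤ} {f : F → M}

theorem char_neg (H : IsTwistedFiveTerm e f) (x : F) : e (-x) = e x := by
  rw [← neg_one_mul, map_mul, H.char_neg_one, one_mul]

theorem char_one_sub_inv (H : IsTwistedFiveTerm e f) {x : F} (hx : x ≠ 0) :
    e (1 - x⁻¹) = e x * e (1 - x) := by
  rw [show 1 - x⁻¹ = -(x⁻¹ * (1 - x)) by field_simp; ring, H.char_neg, map_mul, intMulChar_inv]

theorem map_div_comm (H : IsTwistedFiveTerm e f) (x y : F) : f (x / y) = -f (y / x) := by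
  rw [← inv_div, H.map_inv]

theorem add_map_one_sub_eq (H : IsTwistedFiveTerm e f) {x y : F} (hx₀ : x ≠ 0) (hx₁ : x ≠ 1)
    (hy₀ : y ≠ 0) (hy₁ : y ≠ 1) : f x + f (1 - x) = f y + f (1 - y) := by
  rcases eq_or_ne x y with rfl | hxy
  · rfl
  have h₁ := H.five_term x y hx₀ hx₁ hy₀ hy₁ hxy
  have h₂ := H.five_term (1 - x) (1 - y) (sub_ne_zero.mpr hx₁.symm) (by simpa using hx₀)
    (sub_ne_zero.mpr hy₁.symm) (by simpa using hy₀) (by simpa using hxy)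
  rw [sub_sub_cancel, sub_sub_cancel, H.map_div_comm (1 - y), H.map_div_comm x,
    H.map_div_comm ((1 - y) * x)] at h₂
  linear_combination (norm := module) h₁ + h₂

theorem map_neg_one (H : IsTwistedFiveTerm e f) (h2 : IsSMulRegular M (2 : ℤ)) : f (-1) = 0 := by
  have h := H.map_inv (-1)
  rw [inv_neg_one] at h
  exact h2.right_eq_zero_of_smul (by linear_combination (norm := module) h)

theorem five_term_split (H : IsTwistedFiveTerm e f) (h2 : IsSMulRegular M (2 : ℤ)) {x y : F}
    (h : e x = e y) (h' : e (1 - x) = -e (1 - y)) :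
    f (x / y) = e x • (f x - f y) ∧
      f ((1 - x) / (1 - y)) = e x • f (y * (1 - x) / ((1 - y) * x)) := by
  have hxy₀ : x = 0 ↔ y = 0 := by
    rw [← not_iff_not, ← Ne, ← Ne, ← intMulChar_ne_zero_iff e, h, intMulChar_ne_zero_iff]
  have hxy₁ : x = 1 ↔ y = 1 := by
    rw [← not_iff_not, ← Ne, ← Ne, ← intMulChar_one_sub_ne_zero_iff e, h', neg_ne_zero,
      intMulChar_one_sub_ne_zero_iff]
  rcases eq_or_ne x 1 with rfl | hx₁
  · simp [H.map_one, hxy₁.mp rfl]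
  have hxy : x ≠ y := by
    rintro rfl
    exact (intMulChar_one_sub_ne_zero_iff e).mpr hx₁ (self_eq_neg.mp h')
  have hx₀ : x ≠ 0 := fun hx => hxy (hx.trans (hxy₀.mp hx).symm)
  have hα := intMulChar_mul_self e hx₀
  have hβ := intMulChar_mul_self e (sub_ne_zero.mpr hx₁.symm)
  have hS := H.five_term x y hx₀ hx₁ (mt hxy₀.mpr hx₀) (mt hxy₁.mpr hx₁) hxy
  have hS' := H.five_term y x (mt hxy₀.mpr hx₀) (mt hxy₁.mpr hx₁) hx₀ hx₁ hxy.symm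
  rw [H.map_div_comm x y, H.map_div_comm (x * _), H.map_div_comm (1 - y), mul_comm (1 - x),
    mul_comm x, ← h, ← neg_eq_iff_eq_neg.mpr h'] at hS'
  rw [H.map_div_comm x y]
  generalize f (y / x) = p, f (y * (1 - x) / ((1 - y) * x)) = r, f ((1 - x) / (1 - y)) = s
    at hS hS' ⊢
  constructor <;> apply h2
  · linear_combination (norm := module) -e x • (hS - hS') + hα • (2 : ℤ) • p
  · linear_combination (norm := module) e (1 - x) • (hS + hS') - hβ • (2 : ℤ) • (s - e x • r)

theorem map_eq_zero (H : IsTwistedFiveTerm e f) (h2 : IsSMulRegular M (2 : ℤ)) {w : F}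
    (hw : e w = 1) (hw' : e (1 - w) = -1) : f w = 0 := by
  rcases eq_or_ne w (-1) with rfl | hw₁
  · exact H.map_neg_one h2
  have hw₀ : w ≠ 0 := (intMulChar_ne_zero_iff e).mp (by simp [hw])
  have hw₂ : w ≠ 1 := (intMulChar_one_sub_ne_zero_iff e).mp (by simp [hw'])
  have hadd : 1 + w ≠ 0 := fun h => hw₁ (by linear_combination h)
  have hsq : 1 - w ^ 2 = (1 - w) * (1 + w) := by ring
  have h := (H.five_term_split h2 (x := w ^ 2) (y := -w) (by rw [map_pow, H.char_neg, hw, one_pow])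
    (by rw [hsq, map_mul, hw', sub_neg_eq_add, neg_one_mul])).2
  rw [map_pow, hw, one_pow, one_smul, sub_neg_eq_add, hsq, mul_div_cancel_right₀ _ hadd,
    show -w * ((1 - w) * (1 + w)) / ((1 + w) * w ^ 2) = 1 - w⁻¹ by field_simp; ring] at h
  have hc := H.add_map_one_sub_eq hw₀ hw₂ (inv_ne_zero hw₀) (inv_ne_one.mpr hw₂)
  rw [h, H.map_inv] at hc
  exact h2.right_eq_zero_of_smul (by linear_combination (norm := module) hc)

theorem map_eq_map_of_char_eq_neg_one (H : IsTwistedFiveTerm e f) (h2 : IsSMulRegular M (2 : ℤ))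
    {x y : F} (hx : e x = -1) (hy : e y = -1) (hx' : e (1 - x) ≠ 0)
    (hxy : e (1 - x) = e (1 - y)) : f x = f y := by
  have hx₀ : x ≠ 0 := (intMulChar_ne_zero_iff e).mp (by simp [hx])
  have hy₀ : y ≠ 0 := (intMulChar_ne_zero_iff e).mp (by simp [hy])
  wlog h : e (1 - x) = 1 generalizing x y
  · have hneg : e (1 - x) = -1 :=
      (intMulChar_eq_one_or_neg_one e ((intMulChar_ne_zero_iff e).mp hx')).resolve_left h
    rw [← neg_inj, ← H.map_inv, ← H.map_inv]
    apply this <;> simp [H.char_one_sub_inv, intMulChar_inv, hx₀, hy₀, hx, hy, ← hxy, hneg]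
  have hx₁ := (intMulChar_one_sub_ne_zero_iff e).mp hx'
  have hy₁ := (intMulChar_one_sub_ne_zero_iff e).mp (hxy ▸ hx')
  have hsum := H.add_map_one_sub_eq hx₀ hx₁ hy₀ hy₁
  have hz {z : F} (h₁ : e z = -1) (h₂ : e (1 - z) = 1) : f (1 - z) = 0 :=
    H.map_eq_zero h2 h₂ (by rwa [sub_sub_cancel])
  rwa [hz hx h, hz hy (hxy.symm.trans h), add_zero, add_zero] at hsum

theorem map_mul (H : IsTwistedFiveTerm e f) (h2 : IsSMulRegular M (2 : ℤ)) {w : F}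
    (hw : e w = 1) (hw' : e (1 - w) = -1) (q : F) : f (q * w) = f q := by
  have hw₀ : w ≠ 0 := (intMulChar_ne_zero_iff e).mp (by simp [hw])
  have hfw := H.map_eq_zero h2 hw hw'
  have hqw : e (q * w) = e q := by rw [_root_.map_mul, hw, mul_one]
  rcases eq_or_ne q 0 with rfl | hq₀
  · rw [zero_mul]
  rcases eq_or_ne q 1 with rfl | hq₁
  · rw [one_mul, hfw, H.map_one]
  rcases eq_or_ne (q * w) 1 with hqw₁ | hqw₁
  · rw [hqw₁, eq_inv_of_mul_eq_one_left hqw₁, H.map_inv, hfw, H.map_one, neg_zero]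
  have hsign := intMulChar_eq_one_or_neg_one e hq₀
  rcases Int.isUnit_eq_or_eq_neg ((sub_ne_zero.mpr hqw₁.symm).isUnit.map e)
    ((sub_ne_zero.mpr hq₁.symm).isUnit.map e) with h | h
  · rcases hsign with hq | hq
    · rcases intMulChar_eq_one_or_neg_one e (sub_ne_zero.mpr hq₁.symm) with hq' | hq'
      · have hdiv := (H.five_term_split h2 (hqw.trans (hq.trans hw.symm))
          (by rw [h, hq', hw', neg_neg])).1
        rwa [mul_div_cancel_right₀ _ hw₀, hqw, hq, one_smul, hfw, sub_zero, eq_comm] at hdiv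
      · rw [H.map_eq_zero h2 (hqw.trans hq) (h.trans hq'), H.map_eq_zero h2 hq hq']
    · exact H.map_eq_map_of_char_eq_neg_one h2 (hqw.trans hq) hq
        ((intMulChar_one_sub_ne_zero_iff e).mpr hqw₁) h
  · have hdiv := (H.five_term_split h2 hqw h).1
    rw [mul_div_cancel_left₀ _ hq₀, hfw, hqw] at hdiv
    rcases hsign with hq | hq <;> simpa [hq, sub_eq_zero, eq_comm] using hdiv

theorem map_add_mul_aeval (H : IsTwistedFiveTerm e f) (h2 : IsSMulRegular M (2 : ℤ)) {l : F}
    (hl : e l = -1) (hl' : e (1 - l) = 1) (p : ℤ[X]) {a : F} (ha : a ≠ 0)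
    (hal : a + l * aeval l p ≠ 0) : f (a + l * aeval l p) = f a := by
  classical
  obtain ⟨w, rfl⟩ : ∃ w, l = 1 - w := ⟨1 - l, (sub_sub_cancel 1 l).symm⟩
  rw [sub_sub_cancel] at hl'
  have hw₀ : w ≠ 0 := (intMulChar_ne_zero_iff e).mp (by simp [hl'])
  have hw₁ : w ≠ 1 := (intMulChar_one_sub_ne_zero_iff e).mp (by simp [hl])
  have hmul := H.map_mul h2 hl' hl
  have hadd (b : F) : b ≠ 0 → b + (1 - w) ≠ 0 → f (b + (1 - w)) = f b :=
    map_add_one_sub_of_reflection hw₀ hmul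
      fun x hx₀ hx₁ => H.add_map_one_sub_eq hx₀ hx₁ hw₀ hw₁
  set g := Function.update f 0 (f (1 - w)) with hg
  have hgmul (q : F) : g (q * w) = g q := by
    rcases eq_or_ne q 0 with rfl | hq
    · rw [zero_mul]
    · rw [hg, Function.update_of_ne (mul_ne_zero hq hw₀), Function.update_of_ne hq, hmul]
  have hper : Function.Periodic g (1 - w) :=
    periodic_update_zero (map_neg_one_sub_of_map_add hw₀ hw₁ hmul hadd) hadd
  have h := periodic_mul_aeval (fun s hs => by
    rw [mul_one_sub]
    exact hs.sub_period (periodic_mul_of_map_mul hw₀.isUnit hgmul hs)) hper p a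
  rwa [hg, Function.update_of_ne ha, Function.update_of_ne hal] at h

end IsTwistedFiveTerm

section RPplus

variable {F : Type} [Field F] (χ : Fˣ →* ℤˣ)

open Classical in
/-- The class `[x]` in `RP₊(F)[1/2]_χ` as a function on all of `F`, extended by zero. -/
noncomputable def rpClsExt (x : F) : RPplus F χ :=
  if hx : x = 0 then 0 else rpCls F χ (Units.mk0 x hx)

theorem rpClsExt_of_ne_zero {x : F} (hx : x ≠ 0) :
    rpClsExt χ x = rpCls F χ (Units.mk0 x hx) :=
  dif_neg hx

theorem ofUnitHom_of_ne_zero {x : F} (hx : x ≠ 0) :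
    MulChar.ofUnitHom χ x = (χ (Units.mk0 x hx) : ℤ) :=
  MulChar.ofUnitHom_coe χ (Units.mk0 x hx)

theorem isSMulRegular_two_rpPlus : IsSMulRegular (RPplus F χ) (2 : ℤ) := by
  have h2 : IsUnit (2 : Zhalf) :=
    .of_mul_eq_one ⟨2⁻¹, Subring.subset_closure rfl⟩ (Subtype.ext (mul_inv_cancel₀ two_ne_zero))
  intro m n hmn
  simp only [← Int.cast_smul_eq_zsmul Zhalf, Int.cast_ofNat] at hmn
  exact h2.isSMulRegular _ hmn

theorem mk_eq_zero_of_mem_rpRels {v : Fˣ →₀ Zhalf} (hv : v ∈ rpRels F χ) :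
    (Submodule.Quotient.mk v : RPplus F χ) = 0 :=
  (Submodule.Quotient.mk_eq_zero _).mpr (Submodule.subset_span hv)

theorem isTwistedFiveTerm_rpClsExt (hχ : χ (-1) = 1) :
    IsTwistedFiveTerm (MulChar.ofUnitHom χ) (rpClsExt χ) where
  char_neg_one := by
    simpa [hχ] using MulChar.ofUnitHom_coe χ (-1)
  map_one := by
    rw [rpClsExt_of_ne_zero χ one_ne_zero, Units.mk0_one]
    exact mk_eq_zero_of_mem_rpRels χ (Or.inl (Or.inl (Or.inl rfl)))
  map_inv x := by
    rcases eq_or_ne x 0 with rfl | hx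
    · simp [rpClsExt]
    rw [rpClsExt_of_ne_zero χ hx, rpClsExt_of_ne_zero χ (inv_ne_zero hx),
      show Units.mk0 x⁻¹ (inv_ne_zero hx) = (Units.mk0 x hx)⁻¹ from Units.ext rfl,
      eq_neg_iff_add_eq_zero, add_comm]
    exact mk_eq_zero_of_mem_rpRels χ (Or.inr ⟨Units.mk0 x hx, rfl⟩)
  five_term x y hx₀ hx₁ hy₀ hy₁ hxy := by
    have hx : 1 - x ≠ 0 := sub_ne_zero.mpr hx₁.symm
    have hy : 1 - y ≠ 0 := sub_ne_zero.mpr hy₁.symm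
    have hxi : 1 - x⁻¹ ≠ 0 := sub_ne_zero.mpr (inv_ne_one.mpr hx₁).symm
    have hyi : 1 - y⁻¹ ≠ 0 := sub_ne_zero.mpr (inv_ne_one.mpr hy₁).symm
    have hratio : y * (1 - x) / ((1 - y) * x) = (1 - x⁻¹) / (1 - y⁻¹) := by
      rw [← neg_sub x⁻¹, ← neg_sub y⁻¹, neg_div_neg_eq]
      field_simp
    have hchar : MulChar.ofUnitHom χ x * MulChar.ofUnitHom χ (1 - x) =
        MulChar.ofUnitHom χ (x⁻¹ - 1) := by
      rw [← intMulChar_inv, ← map_mul, mul_one_sub, inv_mul_cancel₀ hx₀]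
    rw [hchar, hratio, ofUnitHom_of_ne_zero χ hx₀, ofUnitHom_of_ne_zero χ hx,
      ofUnitHom_of_ne_zero χ (sub_ne_zero.mpr (inv_ne_one.mpr hx₁)),
      rpClsExt_of_ne_zero χ hx₀, rpClsExt_of_ne_zero χ hy₀,
      rpClsExt_of_ne_zero χ (div_ne_zero hy₀ hx₀), rpClsExt_of_ne_zero χ (div_ne_zero hxi hyi),
      rpClsExt_of_ne_zero χ (div_ne_zero hx hy)]
    simp only [← Int.cast_smul_eq_zsmul Zhalf]
    exact mk_eq_zero_of_mem_rpRels χ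
      (Or.inl (Or.inl (Or.inr ⟨x, y, hx₀, hx₁, hy₀, hy₁, hxy, rfl⟩)))

end RPplus

open Polynomial in
/-- Let `F` be a field with at least `4` elements, `χ : F^× → {±1}` with
`χ(−1) = 1`, and `ℓ ∉ {0,1}` with `χ(ℓ) = −1` and `χ(1 − ℓ) = 1`.  Then for every
`a ∈ F^×` and every `t ∈ ℓℤ[ℓ]` with `a + t ≠ 0`, `[a] = [a + t]` in
`RP₊(F)[1/2]_χ`. -/
theorem stmt4 (F : Type) [Field F] (h4 : 4 ≤ Cardinal.mk F)
    (χ : Fˣ →* ℤˣ) (hneg : χ (-1) = 1)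
    (ℓ : F) (hℓ0 : ℓ ≠ 0) (hℓ1 : ℓ ≠ 1)
    (hχℓ : χ (Units.mk0 ℓ hℓ0) = -1)
    (hχ1ℓ : χ (Units.mk0 (1 - ℓ) (sub_ne_zero.mpr (Ne.symm hℓ1))) = 1)
    (a : Fˣ) (t : F) (ht : ∃ p : Polynomial ℤ, t = ℓ * Polynomial.aeval ℓ p)
    (hat : (a : F) + t ≠ 0) :
    rpCls F χ a = rpCls F χ (Units.mk0 ((a : F) + t) hat) := by
  obtain ⟨p, rfl⟩ := ht
  have hl : MulChar.ofUnitHom χ ℓ = -1 := by rw [ofUnitHom_of_ne_zero χ hℓ0, hχℓ]; rfl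
  have hl' : MulChar.ofUnitHom χ (1 - ℓ) = 1 := by
    rw [ofUnitHom_of_ne_zero χ (sub_ne_zero.mpr hℓ1.symm), hχ1ℓ]; rfl
  have h := (isTwistedFiveTerm_rpClsExt χ hneg).map_add_mul_aeval (isSMulRegular_two_rpPlus χ)
    hl hl' p a.ne_zero hat
  rw [rpClsExt_of_ne_zero χ hat, rpClsExt_of_ne_zero χ a.ne_zero, Units.mk0_val] at h
  exact h.symm
end

section
/- Let m ∈ {1, 2, 3, 7, 11} and let F = ℚ(√(−m)) ⊂ ℂ with ring of integers 𝓞 = ℤ[ω_{−m}] (a Euclidean domain with respect to the norm). Let χ : F^× → {±1} be a group homomorphism with χ(u) = 1 for every unit u of 𝓞, and suppose there exist two non-associated prime elements p, q of 𝓞 with χ(p) = χ(q) = −1. Then RP₊(F)[1/2]_χ = 0, i.e. the class of [x] vanishes in RP₊(F)[1/2]_χ for every x ∈ F^×. -/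
noncomputable section

/-- The complex square root of an integer `d` (equal to `i·√(−d)` when `d < 0`). -/
def sqrtC (d : ℤ) : ℂ :=
  if 0 ≤ d then ((Real.sqrt (d : ℝ) : ℝ) : ℂ) else Complex.I * ((Real.sqrt ((-d : ℤ) : ℝ) : ℝ) : ℂ)

/-- `ω_d ∈ ℂ`: the standard generator of the ring of integers of `ℚ(√d)` for a
squarefree integer `d`, namely `(1 + √d)/2` if `d ≡ 1 (mod 4)` and `√d` otherwise. -/
def omegaQ (d : ℤ) : ℂ :=
  if d % 4 = 1 then (1 + sqrtC d) / 2 else sqrtC d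

/-- The ring `ℤ[ω_d] = ℤ + ℤω_d`, as a subring of `ℂ`. -/
def quadRing (d : ℤ) : Subring ℂ := Subring.closure {omegaQ d}

end

noncomputable section

/-- The imaginary quadratic field `ℚ(√d) = ℚ(ω_d)`, as an intermediate field of `ℚ ⊆ ℂ`. -/
def quadField (d : ℤ) : IntermediateField ℚ ℂ := IntermediateField.adjoin ℚ {omegaQ d}

/-- `ω_d` as an element of `ℚ(√d)`. -/
def omegaK (d : ℤ) : quadField d :=
  ⟨omegaQ d, IntermediateField.subset_adjoin ℚ {omegaQ d} rfl⟩

/-- The ring of integers `𝓞 = ℤ[ω_d] = ℤ + ℤω_d`, as a subring of `ℚ(√d)`. -/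
def intRing (d : ℤ) : Subring (quadField d) := Subring.closure {omegaK d}

end

/-!
Call `x` near if `χ x = -1` and `χ (1 - x) = 1`. If some class `[x]` were nonzero, the five-term
relation would force multiplication by `-1` and by `1 - y`, for `y` near, to permute the near
elements, so that `χ` behaves like the parity of a valuation. Let `S` be the group of all `u` whose
multiplication permutes the near elements, and `Z` the additive group of all `z` with `z + S = S`.
Then `ℤ[S] * Z ⊆ Z` and `1 ∉ Z`, while the near elements lie in both `ℤ[S]` and `Z`. An integral
element `x` with `χ x = -1` is near, since otherwise `x⁻¹` is near, hence `x ∈ ℤ[x⁻¹] ⊆ ℤ[S]` and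
`1 = x * x⁻¹ ∈ Z`. It follows that `a * p` and `b * q` lie in `Z` for all `a, b` in `𝓞`,
contradicting `a * p + b * q = 1`.
-/

open scoped Pointwise

section Arithmetic

variable {R K : Type*} [CommRing R]

lemma isCoprime_of_prime_of_not_associated [IsDomain R] [Ring.DimensionLEOne R] {p q : R}
    (hp : Prime p) (hq : Prime q) (hpq : ¬Associated p q) : IsCoprime p q := by
  have isMaximal_span {r : R} (hr : Prime r) : (Ideal.span {r}).IsMaximal :=
    ((Ideal.span_singleton_prime hr.ne_zero).2 hr).isMaximal (by simpa using hr.ne_zero)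
  have := isMaximal_span hp
  have := isMaximal_span hq
  rw [← Ideal.isCoprime_span_singleton_iff]
  exact Ideal.isCoprime_of_isMaximal (mt Ideal.span_singleton_eq_span_singleton.1 hpq)

open Polynomial in
lemma mem_adjoin_inv_of_isIntegral [Field K] [Algebra R K] {x : K} (hx : IsIntegral R x) :
    x ∈ Algebra.adjoin R {x⁻¹} := by
  obtain rfl | hx0 := eq_or_ne x 0
  · exact zero_mem _
  obtain ⟨P, hP, hPx⟩ := hx
  have := invertibleOfNonzero hx0
  have hrev : aeval x⁻¹ P.reverse = 0 := by
    rw [← invOf_eq_inv]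
    exact (eval₂_reverse_eq_zero_iff _ _ _).2 hPx
  rw [← divX_mul_X_add P.reverse, coeff_zero_reverse, hP.leadingCoeff] at hrev
  simp only [map_add, map_mul, aeval_X, map_one] at hrev
  have hx : -aeval x⁻¹ P.reverse.divX = x := by
    linear_combination -x * hrev + aeval x⁻¹ P.reverse.divX * inv_mul_cancel₀ hx0
  have hmem := neg_mem (aeval_mem_adjoin_singleton R x⁻¹ (p := P.reverse.divX))
  rwa [hx] at hmem

end Arithmetic

lemma mem_stabilizer_of_smul_mem_of_inv_smul_mem {G α : Type*} [Group G] [MulAction G α]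
    {g : G} {s : Set α} (h : ∀ a ∈ s, g • a ∈ s) (h' : ∀ a ∈ s, g⁻¹ • a ∈ s) :
    g ∈ MulAction.stabilizer G s :=
  MulAction.mem_stabilizer_set.2 fun a => ⟨fun ha => by simpa using h' _ ha, h a⟩

section TranslationStabilizer

variable {F : Type*} [Field F] {S : Subgroup Fˣ}

/-- The additive group of `z` with `z + S = S`, for a subgroup `S` of `Fˣ`. If `S` is the unit
group of a local subring of `F`, this is the maximal ideal of that subring. -/
def translationStabilizer (S : Subgroup Fˣ) : AddSubgroup F :=
  AddAction.stabilizer F (S.ofUnits : Set F)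

lemma mem_translationStabilizer {z : F} :
    z ∈ translationStabilizer S ↔ ∀ h, z + h ∈ S.ofUnits ↔ h ∈ S.ofUnits :=
  AddAction.mem_stabilizer_set

lemma one_notMem_translationStabilizer : (1 : F) ∉ translationStabilizer S := fun h => by
  have h0 : (0 : F) ∈ S.ofUnits := (mem_translationStabilizer.1 h 0).1 (by simp)
  exact not_isUnit_zero (S.isUnit_of_mem_ofUnits h0)

lemma coe_mul_mem_translationStabilizer {u : Fˣ} (hu : u ∈ S) {z : F}
    (hz : z ∈ translationStabilizer S) : u * z ∈ translationStabilizer S := by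
  have mul_mem_iff (v : Fˣ) (hv : v ∈ S) (h : F) : v * h ∈ S.ofUnits ↔ h ∈ S.ofUnits :=
    ⟨fun hvh => by simpa using mul_mem (S.mem_ofUnits (inv_mem hv) rfl) hvh,
      mul_mem (S.mem_ofUnits hv rfl)⟩
  refine mem_translationStabilizer.2 fun h => ?_
  rw [← mul_mem_iff _ (inv_mem hu), mul_add, Units.inv_mul_cancel_left,
    mem_translationStabilizer.1 hz, mul_mem_iff _ (inv_mem hu)]

lemma mul_mem_translationStabilizer {a z : F} (ha : a ∈ Algebra.adjoin ℤ (S.ofUnits : Set F))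
    (hz : z ∈ translationStabilizer S) : a * z ∈ translationStabilizer S := by
  induction ha using Algebra.adjoin_induction generalizing z with
  | mem a ha =>
    obtain ⟨u, hu, rfl⟩ := ha
    exact coe_mul_mem_translationStabilizer hu hz
  | algebraMap n => simpa using zsmul_mem hz n
  | add a b _ _ iha ihb => simpa only [add_mul] using add_mem (iha hz) (ihb hz)
  | mul a b _ _ iha ihb => simpa only [mul_assoc] using iha (ihb hz)

lemma inv_notMem_translationStabilizer {x : F} (hx0 : x ≠ 0) (hx : IsIntegral ℤ x)
    (hxA : x⁻¹ ∈ Algebra.adjoin ℤ (S.ofUnits : Set F)) : x⁻¹ ∉ translationStabilizer S := by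
  intro hxZ
  have hxA' : x ∈ Algebra.adjoin ℤ (S.ofUnits : Set F) :=
    Algebra.adjoin_le (by simpa using hxA) (mem_adjoin_inv_of_isIntegral hx)
  apply one_notMem_translationStabilizer (S := S)
  simpa [hx0] using mul_mem_translationStabilizer hxA' hxZ

end TranslationStabilizer

section MulChar

variable {F : Type*} [Field F] {χ : MulChar F ℤ} {x y : F}

lemma mulChar_eq_one_or_eq_neg_one (hx : x ≠ 0) : χ x = 1 ∨ χ x = -1 :=
  Int.isUnit_iff.1 (hx.isUnit.map χ)

lemma mulChar_mul_self (hx : x ≠ 0) : χ x * χ x = 1 :=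
  Int.isUnit_mul_self (hx.isUnit.map χ)

lemma ne_zero_of_mulChar_ne_zero (hx : χ x ≠ 0) : x ≠ 0 :=
  (MulChar.apply_ne_zero_iff.1 hx).ne_zero

lemma mulChar_inv (χ : MulChar F ℤ) (x : F) : χ x⁻¹ = χ x := by
  obtain rfl | hx := eq_or_ne x 0
  · rw [inv_zero]
  calc χ x⁻¹ = χ x⁻¹ * (χ x * χ x) := by rw [mulChar_mul_self hx, mul_one]
    _ = χ x := by rw [← mul_assoc, ← map_mul, inv_mul_cancel₀ hx, map_one, one_mul]

lemma mulChar_div (χ : MulChar F ℤ) (x y : F) : χ (x / y) = χ x * χ y := by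
  rw [div_eq_mul_inv, map_mul, mulChar_inv]

lemma mulChar_neg (hneg : χ (-1) = 1) (x : F) : χ (-x) = χ x := by
  rw [← neg_one_mul, map_mul, hneg, one_mul]

lemma mulChar_sub_comm (hneg : χ (-1) = 1) (x y : F) : χ (x - y) = χ (y - x) := by
  rw [← neg_sub, mulChar_neg hneg]

lemma mulChar_one_sub_inv (hneg : χ (-1) = 1) (hx : x ≠ 0) : χ (1 - x⁻¹) = χ (1 - x) * χ x := by
  rw [mulChar_sub_comm hneg, show x⁻¹ - 1 = (1 - x) / x by field_simp, mulChar_div]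

lemma exists_mulChar_eq_one_and_one_sub_eq_one [CharZero F] (hneg : χ (-1) = 1) :
    ∃ v, χ v = 1 ∧ χ (1 - v) = 1 := by
  by_contra! h
  have one_sub {v : F} (hv : χ v = 1) (hv1 : v ≠ 1) : χ (v - 1) = -1 := by
    rw [mulChar_sub_comm hneg]
    exact (mulChar_eq_one_or_eq_neg_one (sub_ne_zero.2 hv1.symm)).resolve_left (h v hv)
  have h2 : χ 2 = -1 := by
    rw [show (2 : F) = -(-1 - 1) by norm_num, mulChar_neg hneg]
    exact one_sub hneg (by norm_num)
  have h3 : χ 3 = -1 := by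
    rw [show (3 : F) = 2 * 2 - 1 by norm_num]
    exact one_sub (by simp [h2]) (by norm_num)
  have h5 : χ 5 = -1 := by
    rw [show (5 : F) = 2 * 3 - 1 by norm_num]
    exact one_sub (by simp [h2, h3]) (by norm_num)
  have h9 : χ (3 * 3) = -1 := by
    rw [show (3 * 3 : F) = 2 * 5 - 1 by norm_num]
    exact one_sub (by simp [h2, h5]) (by norm_num)
  rw [map_mul, h3] at h9
  norm_num at h9

end MulChar

section Near

variable {F : Type*} [Field F] {χ : MulChar F ℤ} {x : F}

/-- The elements `x` with `χ x = -1` and `χ (1 - x) = 1`. If `χ = (-1) ^ v` for a discrete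
valuation `v`, these are the elements of odd positive valuation. -/
def nearSet (χ : MulChar F ℤ) : Set F := {x | χ x = -1 ∧ χ (1 - x) = 1}

/-- The property of `χ` that multiplication by `-1` and by the units `1 - x` with `x ∈ nearSet χ`
permutes `nearSet χ`, as it does for `χ = (-1) ^ v` with `v` a discrete valuation. -/
structure IsValuationLike (χ : MulChar F ℤ) : Prop where
  neg_one_mem : -1 ∈ MulAction.stabilizer Fˣ (nearSet χ)
  mem_of_one_sub_mem {u : Fˣ} (hu : 1 - (u : F) ∈ nearSet χ) :
    u ∈ MulAction.stabilizer Fˣ (nearSet χ)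

lemma ne_zero_of_mem_nearSet (hx : x ∈ nearSet χ) : x ≠ 0 :=
  ne_zero_of_mulChar_ne_zero (χ := χ) (by simp [hx.1])

lemma one_sub_ne_zero_of_mem_nearSet (hx : x ∈ nearSet χ) : 1 - x ≠ 0 :=
  ne_zero_of_mulChar_ne_zero (χ := χ) (by simp [hx.2])

lemma mem_nearSet_or_inv_mem_nearSet (hneg : χ (-1) = 1) (hx : χ x = -1) :
    x ∈ nearSet χ ∨ x⁻¹ ∈ nearSet χ := by
  have hx0 : x ≠ 0 := ne_zero_of_mulChar_ne_zero (χ := χ) (by simp [hx])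
  have hx1 : x ≠ 1 := by rintro rfl; simp at hx
  refine (mulChar_eq_one_or_eq_neg_one (sub_ne_zero.2 hx1.symm)).imp (⟨hx, ·⟩) fun h => ?_
  exact ⟨by rw [mulChar_inv, hx], by simp [mulChar_one_sub_inv hneg hx0, h, hx]⟩

lemma one_sub_inv_one_sub_mem_nearSet (hneg : χ (-1) = 1) (hx : x ∈ nearSet χ) :
    1 - (1 - x)⁻¹ ∈ nearSet χ := by
  constructor
  · simp [mulChar_one_sub_inv hneg (one_sub_ne_zero_of_mem_nearSet hx), hx.1, hx.2]
  · rw [sub_sub_cancel, mulChar_inv, hx.2]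

lemma nearSet_nonempty_of_not_isValuationLike (h : ¬IsValuationLike χ) : (nearSet χ).Nonempty := by
  rw [Set.nonempty_iff_ne_empty]
  intro hχ
  exact h ⟨by simp [hχ], by simp [hχ]⟩

namespace IsValuationLike

variable (h : IsValuationLike χ)

include h

lemma neg_mem_nearSet (hx : x ∈ nearSet χ) : -x ∈ nearSet χ := by
  simpa [Units.smul_def] using (MulAction.mem_stabilizer_set.1 h.neg_one_mem x).2 hx

lemma one_sub_mem_ofUnits (hx : x ∈ nearSet χ) :
    1 - x ∈ (MulAction.stabilizer Fˣ (nearSet χ)).ofUnits :=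
  Subgroup.mem_ofUnits _ (h.mem_of_one_sub_mem
    (u := Units.mk0 _ (one_sub_ne_zero_of_mem_nearSet hx)) (by simpa using hx)) rfl

lemma mem_adjoin_of_mem_nearSet (hx : x ∈ nearSet χ) :
    x ∈ Algebra.adjoin ℤ ((MulAction.stabilizer Fˣ (nearSet χ)).ofUnits : Set F) := by
  rw [← sub_sub_cancel 1 x]
  exact sub_mem (one_mem _) (Algebra.subset_adjoin (h.one_sub_mem_ofUnits hx))

lemma mem_translationStabilizer_of_mem_nearSet (hx : x ∈ nearSet χ) :
    x ∈ translationStabilizer (MulAction.stabilizer Fˣ (nearSet χ)) := by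
  set S := MulAction.stabilizer Fˣ (nearSet χ)
  have add_mem_S {y g : F} (hy : y ∈ nearSet χ) (hg : g ∈ S.ofUnits) : y + g ∈ S.ofUnits := by
    obtain ⟨u, hu, rfl⟩ := hg
    have huy : ((u⁻¹ : Fˣ) : F) * y ∈ nearSet χ :=
      (MulAction.mem_stabilizer_set.1 (inv_mem hu) y).2 hy
    convert mul_mem (S.mem_ofUnits hu rfl) (h.one_sub_mem_ofUnits (h.neg_mem_nearSet huy)) using 1
    simp [mul_add, add_comm]
  exact mem_translationStabilizer.2 fun g =>
    ⟨fun hg => by simpa using add_mem_S (h.neg_mem_nearSet hx) hg, add_mem_S hx⟩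

lemma mem_nearSet_of_isIntegral (hneg : χ (-1) = 1) (hx : IsIntegral ℤ x) (hχx : χ x = -1) :
    x ∈ nearSet χ :=
  (mem_nearSet_or_inv_mem_nearSet hneg hχx).resolve_right fun hx' =>
    inv_notMem_translationStabilizer (ne_zero_of_mulChar_ne_zero (χ := χ) (by simp [hχx])) hx
      (h.mem_adjoin_of_mem_nearSet hx') (h.mem_translationStabilizer_of_mem_nearSet hx')

lemma mul_mem_translationStabilizer_of_isIntegral (hneg : χ (-1) = 1) {t : F}
    (ht : IsIntegral ℤ t) (hx : IsIntegral ℤ x) (hχx : χ x = -1) :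
    t * x ∈ translationStabilizer (MulAction.stabilizer Fˣ (nearSet χ)) := by
  obtain rfl | ht0 := eq_or_ne t 0
  · simp
  rcases mulChar_eq_one_or_eq_neg_one (χ := χ) ht0 with hχt | hχt
  · exact h.mem_translationStabilizer_of_mem_nearSet
      (h.mem_nearSet_of_isIntegral hneg (ht.mul hx) (by simp [hχt, hχx]))
  · exact mul_mem_translationStabilizer
      (h.mem_adjoin_of_mem_nearSet (h.mem_nearSet_of_isIntegral hneg ht hχt))
      (h.mem_translationStabilizer_of_mem_nearSet (h.mem_nearSet_of_isIntegral hneg hx hχx))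

end IsValuationLike

theorem not_isValuationLike_of_isCoprime (hneg : χ (-1) = 1) {O : Subring F}
    [Algebra.IsIntegral ℤ O] {p q : O} (hpq : IsCoprime p q) (hp : χ p = -1) (hq : χ q = -1) :
    ¬IsValuationLike χ := by
  intro h
  have isIntegral (t : O) : IsIntegral ℤ (t : F) :=
    (Algebra.IsIntegral.isIntegral t).map O.subtype.toIntAlgHom
  obtain ⟨a, b, hab⟩ := hpq
  apply one_notMem_translationStabilizer (S := MulAction.stabilizer Fˣ (nearSet χ))
  have hab' : (a * p + b * q : F) = 1 := by exact_mod_cast congrArg Subtype.val hab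
  rw [← hab']
  exact add_mem
    (h.mul_mem_translationStabilizer_of_isIntegral hneg (isIntegral a) (isIntegral p) hp)
    (h.mul_mem_translationStabilizer_of_isIntegral hneg (isIntegral b) (isIntegral q) hq)

end Near

section Bracket

lemma isUnit_two_Zhalf : IsUnit (2 : Zhalf) :=
  .of_mul_eq_one ⟨2⁻¹, Subring.subset_closure rfl⟩ (Subtype.ext (mul_inv_cancel₀ two_ne_zero))

lemma eq_zero_of_add_self_eq_zero {M : Type*} [AddCommGroup M] [Module Zhalf M] {z : M}
    (hz : z + z = 0) : z = 0 :=
  isUnit_two_Zhalf.smul_eq_zero.1 (by rwa [two_smul])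

variable {F : Type} [Field F] {χ : MulChar F ℤ} {a b v x y : F}

open Classical in
/-- The class `[x]` in `RP₊(F)[1/2]_χ` as a function on all of `F`, with junk value `[0] = 0`. -/
noncomputable def rpBracket (χ : MulChar F ℤ) (x : F) : RPplus F χ.toUnitHom :=
  if hx : x = 0 then 0 else rpCls F χ.toUnitHom (Units.mk0 x hx)

lemma rpBracket_of_ne_zero (hx : x ≠ 0) :
    rpBracket χ x = rpCls F χ.toUnitHom (Units.mk0 x hx) :=
  dif_neg hx

lemma rpBracket_one : rpBracket χ 1 = 0 := by
  rw [rpBracket_of_ne_zero one_ne_zero, Units.mk0_one]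
  exact (Submodule.Quotient.mk_eq_zero _).2 (Submodule.subset_span (Or.inl (Or.inl (Or.inl rfl))))

lemma rpBracket_inv (χ : MulChar F ℤ) (x : F) : rpBracket χ x⁻¹ = -rpBracket χ x := by
  obtain rfl | hx := eq_or_ne x 0
  · rw [inv_zero, show rpBracket χ 0 = 0 from dif_pos rfl, neg_zero]
  rw [rpBracket_of_ne_zero hx, rpBracket_of_ne_zero (inv_ne_zero hx), eq_neg_iff_add_eq_zero,
    add_comm, show Units.mk0 x⁻¹ (inv_ne_zero hx) = (Units.mk0 x hx)⁻¹ from Units.ext rfl]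
  exact (Submodule.Quotient.mk_eq_zero _).2 (Submodule.subset_span (Or.inr ⟨Units.mk0 x hx, rfl⟩))

lemma rpBracket_div_comm (χ : MulChar F ℤ) (x y : F) :
    rpBracket χ (x / y) = -rpBracket χ (y / x) := by
  rw [← inv_div, rpBracket_inv]

lemma rpBracket_neg_one : rpBracket χ (-1) = 0 := by
  have h := rpBracket_inv χ (-1)
  rw [inv_neg_one, eq_neg_iff_add_eq_zero] at h
  exact eq_zero_of_add_self_eq_zero h

lemma rpBracket_eq_zero_of_mulChar_neg_one (hneg : χ (-1) = -1) (x : F) : rpBracket χ x = 0 := by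
  obtain rfl | hx := eq_or_ne x 0
  · exact dif_pos rfl
  have hrel : ((χ (-1) : ℤ) : Zhalf) • rpBracket χ x - rpBracket χ x = 0 := by
    rw [rpBracket_of_ne_zero hx]
    exact (Submodule.Quotient.mk_eq_zero _).2
      (Submodule.subset_span (Or.inl (Or.inr ⟨Units.mk0 x hx, rfl⟩)))
  refine eq_zero_of_add_self_eq_zero ?_
  rw [hneg, Int.cast_neg, Int.cast_one, neg_one_smul] at hrel
  linear_combination (norm := module) -hrel

lemma rpBracket_five_term (hx0 : x ≠ 0) (hx1 : x ≠ 1) (hy0 : y ≠ 0) (hy1 : y ≠ 1) (hxy : x ≠ y) :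
    rpBracket χ x - rpBracket χ y + χ x • rpBracket χ (y / x)
      - (χ x * χ (1 - x)) • rpBracket χ (y * (1 - x) / (x * (1 - y)))
      + χ (1 - x) • rpBracket χ ((1 - x) / (1 - y)) = 0 := by
  have one_sub_ne_zero {z : F} (hz : z ≠ 1) : 1 - z ≠ 0 := sub_ne_zero.2 hz.symm
  have one_sub_inv_ne_zero {z : F} (hz : z ≠ 1) : 1 - z⁻¹ ≠ 0 :=
    one_sub_ne_zero (inv_ne_one.2 hz)
  have hrel := (Submodule.Quotient.mk_eq_zero (rpSub F χ.toUnitHom)).2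
    (Submodule.subset_span (Or.inl (Or.inl (Or.inr ⟨x, y, hx0, hx1, hy0, hy1, hxy, rfl⟩))))
  have hquot : y * (1 - x) / (x * (1 - y)) = (1 - x⁻¹) / (1 - y⁻¹) := by
    have one_sub_inv {z : F} (hz : z ≠ 0) : 1 - z⁻¹ = (z - 1) / z := by field_simp
    rw [one_sub_inv hx0, one_sub_inv hy0, div_div_div_eq, ← neg_div_neg_eq]
    congr 1 <;> ring
  have hχ : χ x * χ (1 - x) = χ (x⁻¹ - 1) := by
    rw [← mulChar_inv χ x, ← map_mul, mul_sub, mul_one, inv_mul_cancel₀ hx0]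
  rw [hquot, hχ, rpBracket_of_ne_zero hx0, rpBracket_of_ne_zero hy0,
    rpBracket_of_ne_zero (div_ne_zero hy0 hx0),
    rpBracket_of_ne_zero (div_ne_zero (one_sub_inv_ne_zero hx1) (one_sub_inv_ne_zero hy1)),
    rpBracket_of_ne_zero (div_ne_zero (one_sub_ne_zero hx1) (one_sub_ne_zero hy1)),
    ← Int.cast_smul_eq_zsmul Zhalf, ← Int.cast_smul_eq_zsmul Zhalf, ← Int.cast_smul_eq_zsmul Zhalf]
  exact hrel

/-- The five-term relations for `(x, y)` and `(y, x)` add up to twice this identity. -/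
lemma smul_rpBracket_div (hx0 : x ≠ 0) (hx1 : x ≠ 1) (hy : χ y = -χ x)
    (h1y : χ (1 - y) = -χ (1 - x)) :
    χ x • rpBracket χ (y / x) = -(χ (1 - x) • rpBracket χ ((1 - x) / (1 - y))) := by
  have hχx : χ x ≠ 0 := (hx0.isUnit.map χ).ne_zero
  have hχ1x : χ (1 - x) ≠ 0 := ((sub_ne_zero.2 hx1.symm).isUnit.map χ).ne_zero
  have hy0 : y ≠ 0 := ne_zero_of_mulChar_ne_zero (χ := χ) (by rwa [hy, neg_ne_zero])
  have h1y0 : 1 - y ≠ 0 := ne_zero_of_mulChar_ne_zero (χ := χ) (by rwa [h1y, neg_ne_zero])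
  have hxy : x ≠ y := by
    rintro rfl
    exact hχx (self_eq_neg.1 hy)
  have hy1 := (sub_ne_zero.1 h1y0).symm
  have h := rpBracket_five_term (χ := χ) hx0 hx1 hy0 hy1 hxy
  have h' := rpBracket_five_term (χ := χ) hy0 hy1 hx0 hx1 hxy.symm
  rw [hy, h1y, rpBracket_div_comm χ x y, rpBracket_div_comm χ (1 - y),
    rpBracket_div_comm χ (x * (1 - y))] at h'
  rw [← add_eq_zero_iff_eq_neg]
  refine eq_zero_of_add_self_eq_zero ?_
  linear_combination (norm := module) h + h'

lemma rpBracket_eq_smul_of_mulChar_eq_neg_one (hneg : χ (-1) = 1) (ha : χ a = -1) (hb : χ b = -1) :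
    rpBracket χ b = (χ (1 - a) * χ (1 - b)) • rpBracket χ a := by
  have ha0 : a ≠ 0 := ne_zero_of_mulChar_ne_zero (χ := χ) (by simp [ha])
  have hb0 : b ≠ 0 := ne_zero_of_mulChar_ne_zero (χ := χ) (by simp [hb])
  have ha1 : 1 - a ≠ 0 := sub_ne_zero.2 (by rintro rfl; simp at ha)
  have hb1 : 1 - b ≠ 0 := sub_ne_zero.2 (by rintro rfl; simp at hb)
  obtain hab | hab := eq_or_ne (1 - a * b) 0
  · obtain rfl : b = a⁻¹ := eq_inv_of_mul_eq_one_right (sub_eq_zero.1 hab).symm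
    rw [mulChar_one_sub_inv hneg ha0, ← mul_assoc, mulChar_mul_self ha1, ha, rpBracket_inv]
    module
  -- The parameters are chosen so that `y / x = a` and `(1 - x) / (1 - y) = b` for `y = a * x`.
  set x := (1 - b) / (1 - a * b) with hx
  have h1x : 1 - x = b * (1 - a) / (1 - a * b) := by rw [hx, one_sub_div hab]; ring
  have h1y : 1 - a * x = (1 - a) / (1 - a * b) := by rw [hx, mul_div_assoc', one_sub_div hab]; ring
  have hx0 : x ≠ 0 := div_ne_zero hb1 hab
  have h1x0 : 1 - x ≠ 0 := h1x ▸ div_ne_zero (mul_ne_zero hb0 ha1) hab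
  have key := smul_rpBracket_div (χ := χ) (y := a * x) hx0 (sub_ne_zero.1 h1x0).symm (by simp [ha])
    (by simp [h1x, h1y, mulChar_div, hb])
  rw [mul_div_cancel_right₀ _ hx0, show (1 - x) / (1 - a * x) = b by
    rw [h1x, h1y, div_div_div_cancel_right₀ hab, mul_div_cancel_right₀ _ ha1]] at key
  have hχx : χ x = χ (1 - a * b) * χ (1 - b) := by rw [hx, mulChar_div, mul_comm]
  have hχ1x : χ (1 - x) = -(χ (1 - a * b) * χ (1 - a)) := by
    rw [h1x, mulChar_div, map_mul, hb]
    ring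
  rw [hχx, hχ1x, neg_smul, neg_neg, mul_smul, mul_smul] at key
  have key' : χ (1 - b) • rpBracket χ a = χ (1 - a) • rpBracket χ b := by
    simpa only [smul_smul, ← mul_assoc, mulChar_mul_self hab, one_mul]
      using congrArg (χ (1 - a * b) • ·) key
  rw [mul_smul, key', smul_smul, mulChar_mul_self ha1, one_smul]

lemma rpBracket_eq_smul_of_mem_nearSet (hneg : χ (-1) = 1) (ha : a ∈ nearSet χ) (hb : χ b = -1) :
    rpBracket χ b = χ (1 - b) • rpBracket χ a := by
  simpa [ha.2] using rpBracket_eq_smul_of_mulChar_eq_neg_one hneg ha.1 hb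

lemma rpBracket_eq_of_mem_nearSet (hneg : χ (-1) = 1) (ha : a ∈ nearSet χ) (hb : b ∈ nearSet χ) :
    rpBracket χ a = rpBracket χ b := by
  rw [rpBracket_eq_smul_of_mem_nearSet hneg hb ha.1, ha.2, one_smul]

lemma rpBracket_sub_add_smul_div (hneg : χ (-1) = 1) (hx0 : x ≠ 0) (hx1 : x ≠ 1) (hy : χ y = χ x)
    (h1y : χ (1 - y) = -χ (1 - x)) :
    rpBracket χ x - rpBracket χ y + χ x • rpBracket χ (y / x) = 0 := by
  have hχx := mulChar_mul_self (χ := χ) hx0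
  have hχ1x := mulChar_mul_self (χ := χ) (sub_ne_zero.2 hx1.symm)
  have hy0 : y ≠ 0 := ne_zero_of_mulChar_ne_zero (χ := χ) fun h => by simp [← hy, h] at hχx
  have h1y0 : 1 - y ≠ 0 := ne_zero_of_mulChar_ne_zero (χ := χ) fun h => by
    rw [h, zero_eq_neg] at h1y
    simp [h1y] at hχ1x
  have hxy : x ≠ y := by
    rintro rfl
    simp [self_eq_neg.1 h1y] at hχ1x
  set b := (1 - x) / (1 - y) with hb
  set e := y * (1 - x) / (x * (1 - y)) with he
  have hχb : χ b = -1 := by rw [hb, mulChar_div, h1y, mul_neg, hχ1x]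
  have hχe : χ e = -1 := by
    rw [he, mul_div_mul_comm, map_mul, hχb, mulChar_div, hy, hχx, one_mul]
  have h1b : 1 - b = (x - y) / (1 - y) := by rw [hb, one_sub_div h1y0]; ring
  have h1e : 1 - e = (1 - b) / x := by rw [h1b, he]; field_simp; ring
  have hfb : rpBracket χ b = χ x • rpBracket χ e := by
    rw [rpBracket_eq_smul_of_mulChar_eq_neg_one hneg hχe hχb, h1e, mulChar_div, mul_right_comm,
      mulChar_mul_self (h1b ▸ div_ne_zero (sub_ne_zero.2 hxy) h1y0), one_mul]
  have h5 := rpBracket_five_term (χ := χ) hx0 hx1 hy0 (sub_ne_zero.1 h1y0).symm hxy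
  rw [← hb, ← he, hfb] at h5
  linear_combination (norm := module) h5

lemma rpBracket_one_sub_div_one_sub (hneg : χ (-1) = 1) (hx : x ∈ nearSet χ) (hy : χ y = 1)
    (h1y : χ (1 - y) = 1) :
    rpBracket χ ((1 - x) / (1 - y)) = rpBracket χ y - rpBracket χ x := by
  have hx0 := ne_zero_of_mem_nearSet hx
  have hx1 := (sub_ne_zero.1 (one_sub_ne_zero_of_mem_nearSet hx)).symm
  have hy0 : y ≠ 0 := ne_zero_of_mulChar_ne_zero (χ := χ) (by simp [hy])
  have h1y0 : 1 - y ≠ 0 := ne_zero_of_mulChar_ne_zero (χ := χ) (by simp [h1y])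
  have hxy : x ≠ y := by
    rintro rfl
    simp [hx.1] at hy
  set a := y / x with ha
  set e := y * (1 - x) / (x * (1 - y)) with he
  have hχa : χ a = -1 := by simp [ha, mulChar_div, hx.1, hy]
  have hχe : χ e = -1 := by simp [he, mulChar_div, hx.1, hx.2, hy, h1y]
  have h1a : 1 - a = (x - y) / x := one_sub_div hx0
  have h1e : 1 - e = (1 - a) / (1 - y) := by rw [h1a, he]; field_simp; ring
  have hfa : rpBracket χ a = rpBracket χ e := by
    rw [rpBracket_eq_smul_of_mulChar_eq_neg_one hneg hχe hχa, h1e, mulChar_div, h1y, mul_one,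
      mulChar_mul_self (h1a ▸ div_ne_zero (sub_ne_zero.2 hxy) hx0), one_smul]
  have h5 := rpBracket_five_term (χ := χ) hx0 hx1 hy0 (sub_ne_zero.1 h1y0).symm hxy
  rw [← ha, ← he, hfa, hx.1, hx.2] at h5
  linear_combination (norm := module) h5

lemma rpBracket_add_rpBracket_one_sub (hneg : χ (-1) = 1) (hx : x ∈ nearSet χ) (hv : χ v = 1)
    (h1v : χ (1 - v) = 1) :
    rpBracket χ v + rpBracket χ (1 - v) = rpBracket χ x + rpBracket χ (1 - x) := by
  have hv0 : v ≠ 0 := ne_zero_of_mulChar_ne_zero (χ := χ) (by simp [hv])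
  have h1v0 : 1 - v ≠ 0 := ne_zero_of_mulChar_ne_zero (χ := χ) (by simp [h1v])
  have h := rpBracket_sub_add_smul_div hneg hv0 (sub_ne_zero.1 h1v0).symm
    (y := 1 - x) (by rw [hx.2, hv]) (by rw [sub_sub_cancel, hx.1, h1v])
  have h' := rpBracket_one_sub_div_one_sub hneg hx h1v (by rwa [sub_sub_cancel])
  rw [sub_sub_cancel] at h'
  rw [hv, h'] at h
  linear_combination (norm := module) h

lemma rpBracket_one_sub_eq_zero [CharZero F] (hneg : χ (-1) = 1) (hx : x ∈ nearSet χ) :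
    rpBracket χ (1 - x) = 0 := by
  obtain ⟨v, hv, h1v⟩ := exists_mulChar_eq_one_and_one_sub_eq_one hneg
  have hx' := one_sub_inv_one_sub_mem_nearSet hneg hx
  have h := rpBracket_add_rpBracket_one_sub hneg hx hv h1v
  have h' := rpBracket_add_rpBracket_one_sub hneg hx' hv h1v
  rw [sub_sub_cancel, rpBracket_inv, rpBracket_eq_of_mem_nearSet hneg hx' hx] at h'
  refine eq_zero_of_add_self_eq_zero ?_
  linear_combination (norm := module) h' - h

lemma mem_stabilizer_of_rpBracket_eq_zero (hneg : χ (-1) = 1) (hx : x ∈ nearSet χ)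
    (hfx : rpBracket χ x ≠ 0) {u : Fˣ} (hu : χ u = 1) (hfu : rpBracket χ u = 0) :
    u ∈ MulAction.stabilizer Fˣ (nearSet χ) := by
  have smul_mem {g : Fˣ} (hg : χ g = 1) (hfg : rpBracket χ g = 0) (y : F) (hy : y ∈ nearSet χ) :
      g • y ∈ nearSet χ := by
    have hy0 := ne_zero_of_mem_nearSet hy
    have h1y := (sub_ne_zero.1 (one_sub_ne_zero_of_mem_nearSet hy)).symm
    have hχ : χ (g * y) = -1 := by rw [map_mul, hg, hy.1, one_mul]
    have h1 : (1 : F) ≠ g * y := fun h => by simp [← h] at hχ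
    refine ⟨hχ, (mulChar_eq_one_or_eq_neg_one (sub_ne_zero.2 h1)).resolve_right fun hfar => hfx ?_⟩
    have h := rpBracket_sub_add_smul_div hneg hy0 h1y (by rw [hχ, hy.1]) (by rw [hfar, hy.2])
    rw [mul_div_cancel_right₀ _ hy0, hfg, rpBracket_eq_smul_of_mem_nearSet hneg hx hχ, hfar,
      rpBracket_eq_of_mem_nearSet hneg hy hx] at h
    refine eq_zero_of_add_self_eq_zero ?_
    linear_combination (norm := module) h
  refine mem_stabilizer_of_smul_mem_of_inv_smul_mem (smul_mem hu hfu) (smul_mem ?_ ?_)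
  · rw [Units.val_inv_eq_inv_val, mulChar_inv, hu]
  · rw [Units.val_inv_eq_inv_val, rpBracket_inv, hfu, neg_zero]

theorem rpBracket_eq_zero_of_mem_nearSet [CharZero F] (hneg : χ (-1) = 1)
    (hχ : ¬IsValuationLike χ) (hx : x ∈ nearSet χ) : rpBracket χ x = 0 := by
  by_contra hfx
  refine hχ ⟨?_, fun {u} hu => ?_⟩
  · exact mem_stabilizer_of_rpBracket_eq_zero hneg hx hfx (by simpa using hneg)
      (by simpa using rpBracket_neg_one)
  · refine mem_stabilizer_of_rpBracket_eq_zero hneg hx hfx (by simpa using hu.2) ?_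
    simpa using rpBracket_one_sub_eq_zero hneg hu

end Bracket

section Support

variable {F : Type} [Field F] {χ : MulChar F ℤ} {v x : F}

/-- The elements of `ker χ` with nonzero class. If all classes of elements of `nearSet χ` vanish,
multiplication by an element of this set permutes `nearSet χ`. -/
def bracketSupport (χ : MulChar F ℤ) : Set F := {v | χ v = 1 ∧ rpBracket χ v ≠ 0}

lemma ne_zero_of_mem_bracketSupport (hv : v ∈ bracketSupport χ) : v ≠ 0 :=
  ne_zero_of_mulChar_ne_zero (χ := χ) (by simp [hv.1])

lemma inv_mem_bracketSupport (hv : v ∈ bracketSupport χ) : v⁻¹ ∈ bracketSupport χ :=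
  ⟨by rw [mulChar_inv, hv.1], by rw [rpBracket_inv]; exact neg_ne_zero.2 hv.2⟩

lemma mulChar_one_sub_of_mem_bracketSupport [CharZero F] (hneg : χ (-1) = 1)
    (hv : v ∈ bracketSupport χ) : χ (1 - v) = 1 := by
  have hv1 : v ≠ 1 := by
    rintro rfl
    exact hv.2 rpBracket_one
  refine (mulChar_eq_one_or_eq_neg_one (sub_ne_zero.2 hv1.symm)).resolve_right fun h => hv.2 ?_
  rw [← sub_sub_cancel 1 v]
  exact rpBracket_one_sub_eq_zero hneg ⟨h, by rw [sub_sub_cancel, hv.1]⟩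

lemma div_one_sub_mem_bracketSupport [CharZero F] (hneg : χ (-1) = 1) (hx : x ∈ nearSet χ)
    (hv : v ∈ bracketSupport χ) : v / (1 - x) ∈ bracketSupport χ := by
  refine ⟨by rw [mulChar_div, hv.1, hx.2, one_mul], ?_⟩
  have h := rpBracket_sub_add_smul_div hneg (one_sub_ne_zero_of_mem_nearSet hx) (y := v)
    (by simpa using ne_zero_of_mem_nearSet hx) (by rw [hv.1, hx.2])
    (by rw [mulChar_one_sub_of_mem_bracketSupport hneg hv, sub_sub_cancel, hx.1, neg_neg])
  rw [rpBracket_one_sub_eq_zero hneg hx, hx.2, one_smul, zero_sub, neg_add_eq_zero] at h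
  exact h ▸ hv.2

section

variable [CharZero F] (hneg : χ (-1) = 1) (hnear : ∀ y ∈ nearSet χ, rpBracket χ y = 0)

include hneg hnear

lemma one_sub_mem_bracketSupport (hx : x ∈ nearSet χ) (hv : v ∈ bracketSupport χ) :
    1 - v ∈ bracketSupport χ := by
  have h1v := mulChar_one_sub_of_mem_bracketSupport hneg hv
  refine ⟨h1v, fun h => hv.2 ?_⟩
  have hsum := rpBracket_add_rpBracket_one_sub hneg hx hv.1 h1v
  rwa [h, hnear x hx, rpBracket_one_sub_eq_zero hneg hx, add_zero, add_zero] at hsum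

lemma div_mem_nearSet (hx : x ∈ nearSet χ) (hv : v ∈ bracketSupport χ) : x / v ∈ nearSet χ := by
  have hv0 := ne_zero_of_mem_bracketSupport hv
  have h1x := one_sub_ne_zero_of_mem_nearSet hx
  refine ⟨by rw [mulChar_div, hx.1, hv.1, mul_one], ?_⟩
  have h := mulChar_one_sub_of_mem_bracketSupport hneg
    (div_one_sub_mem_bracketSupport hneg hx (one_sub_mem_bracketSupport hneg hnear hx hv))
  rw [one_sub_div h1x, mulChar_div, hx.2, mul_one, sub_sub_sub_cancel_left] at h
  rw [one_sub_div hv0, mulChar_div, h, hv.1, one_mul]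

lemma mem_stabilizer_of_mem_bracketSupport {u : Fˣ} (hu : (u : F) ∈ bracketSupport χ) :
    u ∈ MulAction.stabilizer Fˣ (nearSet χ) := by
  refine mem_stabilizer_of_smul_mem_of_inv_smul_mem (fun y hy => ?_) fun y hy => ?_
  · simpa [Units.smul_def, mul_comm] using
      div_mem_nearSet hneg hnear hy (inv_mem_bracketSupport hu)
  · simpa [Units.smul_def, div_eq_mul_inv, mul_comm] using div_mem_nearSet hneg hnear hy hu

lemma isValuationLike_of_mem_bracketSupport (hx : x ∈ nearSet χ) (hv : v ∈ bracketSupport χ) :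
    IsValuationLike χ := by
  have mem_stabilizer {w : F} (hw : w ∈ bracketSupport χ) :
      Units.mk0 w (ne_zero_of_mem_bracketSupport hw) ∈ MulAction.stabilizer Fˣ (nearSet χ) :=
    mem_stabilizer_of_mem_bracketSupport hneg hnear hw
  have hv0 := ne_zero_of_mem_bracketSupport hv
  constructor
  · have hw := one_sub_mem_bracketSupport hneg hnear hx hv
    have hw' := one_sub_mem_bracketSupport hneg hnear hx (inv_mem_bracketSupport hv)
    convert div_mem (mul_mem (mem_stabilizer hv) (mem_stabilizer hw')) (mem_stabilizer hw) using 1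
    ext
    have hw0 := ne_zero_of_mem_bracketSupport hw
    simp only [Units.val_neg, Units.val_one, Units.val_div_eq_div_val, Units.val_mul,
      Units.val_mk0]
    field_simp
    ring
  · intro u hu
    have hvu : v / u ∈ bracketSupport χ := by
      simpa using div_one_sub_mem_bracketSupport hneg hu hv
    convert div_mem (mem_stabilizer hv) (mem_stabilizer hvu) using 1
    ext
    simp [hv0]

end

theorem rpBracket_eq_zero [CharZero F] (hneg : χ (-1) = 1) (hχ : ¬IsValuationLike χ) (x : F) :
    rpBracket χ x = 0 := by
  have hnear (y : F) (hy : y ∈ nearSet χ) : rpBracket χ y = 0 :=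
    rpBracket_eq_zero_of_mem_nearSet hneg hχ hy
  obtain ⟨z, hz⟩ := nearSet_nonempty_of_not_isValuationLike hχ
  obtain rfl | hx0 := eq_or_ne x 0
  · exact dif_pos rfl
  obtain h | h := mulChar_eq_one_or_eq_neg_one (χ := χ) hx0
  · by_contra hfx
    exact hχ (isValuationLike_of_mem_bracketSupport hneg hnear hz ⟨h, hfx⟩)
  · rw [rpBracket_eq_smul_of_mem_nearSet hneg hz h, hnear z hz, smul_zero]

end Support

section QuadraticField

lemma sqrtC_sq (d : ℤ) : sqrtC d ^ 2 = d := by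
  unfold sqrtC
  split_ifs with h
  · rw [← Complex.ofReal_pow, Real.sq_sqrt (Int.cast_nonneg h), Complex.ofReal_intCast]
  · rw [mul_pow, Complex.I_sq, ← Complex.ofReal_pow,
      Real.sq_sqrt (Int.cast_nonneg (by lia)), Complex.ofReal_intCast]
    push_cast
    ring

open Polynomial in
lemma isIntegral_omegaQ (d : ℤ) : IsIntegral ℤ (omegaQ d) := by
  unfold omegaQ
  have hs := sqrtC_sq d
  split_ifs with h
  · obtain ⟨k, hk⟩ : ∃ k, d = 4 * k + 1 := ⟨d / 4, by lia⟩
    rw [hk, Int.cast_add, Int.cast_mul, Int.cast_ofNat, Int.cast_one] at hs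
    refine ⟨X ^ 2 - X - C k, by monicity!, ?_⟩
    simp only [hk, eval₂_sub, eval₂_pow, eval₂_X, eval₂_C, algebraMap_int_eq,
      Int.coe_castRingHom]
    linear_combination hs / 4
  · exact .of_pow two_pos (hs ▸ isIntegral_algebraMap (x := d))

lemma intRing_le_integralClosure (d : ℤ) :
    intRing d ≤ (integralClosure ℤ (quadField d)).toSubring := by
  rw [intRing, Subring.closure_le, Set.singleton_subset_iff]
  exact (isIntegral_algHom_iff ((quadField d).val.restrictScalars ℤ)
    Subtype.val_injective).1 (isIntegral_omegaQ d)

instance (d : ℤ) : Algebra.IsIntegral ℤ (intRing d) :=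
  ⟨fun x => (isIntegral_algHom_iff (intRing d).subtype.toIntAlgHom Subtype.val_injective).1
    (intRing_le_integralClosure d x.2)⟩

instance (d : ℤ) : Ring.DimensionLEOne (intRing d) := .of_isIntegral ℤ _

end QuadraticField

theorem stmt14_general {F : Type} [Field F] [CharZero F] {O : Subring F} [Algebra.IsIntegral ℤ O]
    (χ : Fˣ →* ℤˣ) {p q : O} (hpq : IsCoprime p q) (hp0 : (p : F) ≠ 0) (hq0 : (q : F) ≠ 0)
    (hχp : χ (Units.mk0 (p : F) hp0) = -1) (hχq : χ (Units.mk0 (q : F) hq0) = -1) (x : Fˣ) :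
    rpCls F χ x = 0 := by
  obtain ⟨ψ, rfl⟩ : ∃ ψ : MulChar F ℤ, ψ.toUnitHom = χ := MulChar.equivToUnitHom.surjective χ
  rw [← Units.mk0_val x x.ne_zero, ← rpBracket_of_ne_zero]
  have hψ (u : Fˣ) (hu : ψ.toUnitHom u = -1) : ψ u = -1 := by
    rw [← MulChar.coe_toUnitHom, hu, Units.val_neg, Units.val_one]
  obtain h | h := mulChar_eq_one_or_eq_neg_one (χ := ψ) (neg_ne_zero.2 one_ne_zero)
  · exact rpBracket_eq_zero h (not_isValuationLike_of_isCoprime h hpq (hψ _ hχp) (hψ _ hχq)) x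
  · exact rpBracket_eq_zero_of_mulChar_neg_one h x

/-- Let `m ∈ {1,2,3,7,11}`, `F = ℚ(√(−m))` with ring of integers
`𝓞 = ℤ[ω_{−m}]` (a Euclidean domain).  Let `χ : F^× → {±1}` be trivial on the units of
`𝓞` with `χ(p) = χ(q) = −1` for two non-associated primes `p, q` of `𝓞`.  Then
`RP₊(F)[1/2]_χ = 0`, i.e. the class of `[x]` vanishes for every `x ∈ F^×`. -/
theorem stmt14 (m : ℤ) (hm : m ∈ ({1, 2, 3, 7, 11} : Set ℤ))
    (χ : (quadField (-m))ˣ →* ℤˣ)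
    (hunits : ∀ u : (intRing (-m))ˣ,
      χ (Units.map (intRing (-m)).subtype.toMonoidHom u) = 1)
    (p q : intRing (-m)) (hp : Prime p) (hq : Prime q) (hpq : ¬ Associated p q)
    (hχp : χ (Units.mk0 ((p : quadField (-m))) (by simpa using hp.ne_zero)) = -1)
    (hχq : χ (Units.mk0 ((q : quadField (-m))) (by simpa using hq.ne_zero)) = -1) :
    ∀ x : (quadField (-m))ˣ, rpCls (quadField (-m)) χ x = 0 := by
  exact stmt14_general χ (isCoprime_of_prime_of_not_associated hp hq hpq) _ _ hχp hχq
end
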